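/- Let n ≥ 4 and 2 ≤ k ≤ n−2 be integers, let A be an (n−k)×n matrix over ℂ with y_{i,j}(A) ≠ 0 for all 0 ≤ i ≤ n−k and 0 ≤ j ≤ k, and let q ∈ ℂ. Then the superpotential evaluated at A satisfies Σ_{i=1}^{n} ( p_{J_i⁺}(A)/p_{J_i}(A) ) · q^{δ_{i,k}} = y_{1,k−1}/y_{0,k} + y_{n−k−1,1}/y_{n−k,0} + Σ_{d=1−k}^{n−k−2} [ Σ_{(a,b) : a−b = d, 0 ≤ a ≤ n−k−1, 1 ≤ b ≤ k−1} ( y_{a,b+1} y_{a+1,b−1} )/( y_{a,b} y_{a+1,b} ) + Σ_{(a,b) : a−b = d, 1 ≤ a ≤ n−k−1, 1 ≤ b ≤ k} ( y_{a−1,b} y_{a+1,b−1} )/( y_{a,b−1} y_{a,b} ) ] · q^{δ_{0,d}}, where δ denotes the Kronecker delta and all y's are evaluated at A. -/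

import Mathlib

open Finset

/-- The set `[m] = {1, …, m} ⊆ ℤ/nℤ` (with `[0] = ∅`). -/
def seg (n m : ℕ) : Finset (ZMod n) := (Finset.Icc 1 m).image (fun t : ℕ => (t : ZMod n))

/-- The Plücker coordinate `p_J(A)` of an `r×n` matrix `A` whose columns are indexed by
`ℤ/nℤ`: the determinant of the `r×r` submatrix of `A` formed by the columns indexed by
`J`, ordered by the representatives `1, …, n` in increasing order (and `0` if `J` does
not have exactly `r` elements).  The auxiliary key `x ↦ (x−1).val` is order-isomorphic
to the representative in `{1, …, n}`. -/
noncomputable def plucker (n r : ℕ) (A : Matrix (Fin r) (ZMod n) ℂ)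
    (J : Finset (ZMod n)) : ℂ :=
  if h : (J.image (fun x => (x - 1).val)).card = r then
    (A.submatrix id
      (fun i => ((((J.image (fun x => (x - 1).val)).orderIsoOfFin h i :
        (J.image (fun x => (x - 1).val))) : ℕ) : ZMod n) + 1)).det
  else 0

/-- The cyclic interval `J_i = {i+1, …, i+(n−k)} ⊆ ℤ/nℤ`. -/
def Jcyc (n k : ℕ) (i : ZMod n) : Finset (ZMod n) :=
  (Finset.Icc 1 (n - k)).image (fun t : ℕ => i + (t : ZMod n))

/-- `J_i⁺ = (J_i ∖ {i+n−k}) ∪ {i+n−k+1}`. -/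
def Jplus (n k : ℕ) (i : ZMod n) : Finset (ZMod n) :=
  insert (i + (((n - k + 1 : ℕ)) : ZMod n)) ((Jcyc n k i).erase (i + (((n - k : ℕ)) : ZMod n)))

/-- The checkboard label `J^ch_{i,j} = σ^{−⌈(i+j)/2⌉}( [i] ∪ ([n−k+j]∖[i+j]) )`. -/
def Jch (k n i j : ℕ) : Finset (ZMod n) :=
  (seg n i ∪ (seg n (n - k + j) \ seg n (i + j))).image
    (fun x => x - (((i + j + 1) / 2 : ℕ) : ZMod n))

/-- The Plücker coordinates `y_{i,j}` attached to the checkboard graph. -/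
noncomputable def ych (k n : ℕ) (A : Matrix (Fin (n - k)) (ZMod n) ℂ) (i j : ℕ) : ℂ :=
  plucker n (n - k) A (Jch k n i j)

/-- First sum appearing in the superpotential formulas:
`Σ_{a−b=d, 0 ≤ a ≤ n−k−1, 1 ≤ b ≤ k−1} (y_{a,b+1} y_{a+1,b−1})/(y_{a,b} y_{a+1,b})`. -/
noncomputable def sumA (k n : ℕ) (y : ℕ → ℕ → ℂ) (d : ℤ) : ℂ :=
  ∑ p ∈ ((Finset.range (n - k)) ×ˢ (Finset.Icc 1 (k - 1))).filter
      (fun p => (p.1 : ℤ) - (p.2 : ℤ) = d),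
    (y p.1 (p.2 + 1) * y (p.1 + 1) (p.2 - 1)) / (y p.1 p.2 * y (p.1 + 1) p.2)

/-- Second sum appearing in the superpotential formulas:
`Σ_{a−b=d, 1 ≤ a ≤ n−k−1, 1 ≤ b ≤ k} (y_{a−1,b} y_{a+1,b−1})/(y_{a,b−1} y_{a,b})`. -/
noncomputable def sumB (k n : ℕ) (y : ℕ → ℕ → ℂ) (d : ℤ) : ℂ :=
  ∑ p ∈ ((Finset.Icc 1 (n - k - 1)) ×ˢ (Finset.Icc 1 k)).filter
      (fun p => (p.1 : ℤ) - (p.2 : ℤ) = d),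
    (y (p.1 - 1) p.2 * y (p.1 + 1) (p.2 - 1)) / (y p.1 (p.2 - 1) * y p.1 p.2)


noncomputable def Dl (r : ℕ) (l : List (Fin r → ℂ)) : ℂ :=
  if h : l.length = r then
    Matrix.det (Matrix.of fun i : Fin r => l.get (i.cast h.symm)) else 0

theorem Dl_of_ne {r : ℕ} {l : List (Fin r → ℂ)} (h : l.length ≠ r) : Dl r l = 0 := by
  simp [Dl, h]

theorem Dl_not_nodup {r : ℕ} {l : List (Fin r → ℂ)} (h : ¬ l.Nodup) : Dl r l = 0 := by
  unfold Dl
  split_ifs with hl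
  · rw [List.nodup_iff_injective_get] at h
    simp only [Function.Injective, not_forall] at h
    obtain ⟨i, j, hij, hne⟩ := h
    refine Matrix.det_zero_of_row_eq (i := i.cast hl) (j := j.cast hl) ?_ ?_
    · intro h; apply hne; simpa [Fin.ext_iff] using h
    · ext t; simp at hij; simp [hij]
  · rfl

theorem Dl_swap {r : ℕ} (l₁ l₂ : List (Fin r → ℂ)) (a b : Fin r → ℂ) :
    Dl r (l₁ ++ a :: b :: l₂) = - Dl r (l₁ ++ b :: a :: l₂) := by
  unfold Dl
  by_cases hl : (l₁ ++ a :: b :: l₂).length = r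
  · have hl' : (l₁ ++ b :: a :: l₂).length = r := by simpa using hl
    rw [dif_pos hl, dif_pos hl']
    have hlen : l₁.length + (l₂.length + 1 + 1) = r := by simpa using hl
    let p : Fin r := ⟨l₁.length, by omega⟩
    let p' : Fin r := ⟨l₁.length + 1, by omega⟩
    have hpp : p ≠ p' := by simp [p, p']
    have := Matrix.det_permute (Equiv.swap p p')
      (Matrix.of fun i : Fin r => (l₁ ++ b :: a :: l₂).get (i.cast hl'.symm))
    rw [Equiv.Perm.sign_swap hpp] at this
    simp only [Units.val_neg, Units.val_one, Int.cast_neg, Int.cast_one, neg_mul, one_mul] at this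
    rw [← this]
    congr 1
    ext i j
    simp only [Matrix.submatrix_apply, Matrix.of_apply, id]
    refine congrFun ?_ j
    by_cases h1 : i = p
    · subst h1
      rw [Equiv.swap_apply_left]
      simp only [p, p', List.get_eq_getElem, Fin.val_cast]
      rw [List.getElem_append_right (by omega), List.getElem_append_right (by omega)]
      simp
    · by_cases h2 : i = p'
      · subst h2
        rw [Equiv.swap_apply_right]
        simp only [p, p', List.get_eq_getElem, Fin.val_cast]
        rw [List.getElem_append_right (by omega), List.getElem_append_right (by omega)]
        simp
      · rw [Equiv.swap_apply_of_ne_of_ne h1 h2]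
        simp only [List.get_eq_getElem, Fin.val_cast]
        simp only [p, p', Fin.ext_iff] at h1 h2
        rcases lt_or_ge i.val l₁.length with h | h
        · rw [List.getElem_append_left h, List.getElem_append_left h]
        · rw [List.getElem_append_right h, List.getElem_append_right h]
          obtain ⟨t, ht⟩ : ∃ t, i.val - l₁.length = t + 2 := ⟨i.val - l₁.length - 2, by omega⟩
          simp [ht]
  · have hl' : ¬ (l₁ ++ b :: a :: l₂).length = r := by simpa using hl
    rw [dif_neg hl, dif_neg hl']; simp

theorem Dl_move {r : ℕ} (S l₁ l₂ : List (Fin r → ℂ)) (a : Fin r → ℂ) :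
    Dl r (l₁ ++ (S ++ a :: l₂)) = (-1) ^ S.length * Dl r (l₁ ++ a :: (S ++ l₂)) := by
  induction S generalizing l₁ with
  | nil => simp
  | cons s S ih =>
    have := ih (l₁ ++ [s])
    simp only [List.append_assoc, List.cons_append, List.nil_append] at this ⊢
    rw [this, Dl_swap, List.length_cons, pow_succ]; ring

theorem Dl_smul {r : ℕ} (l : List (Fin r → ℂ)) (a : Fin r → ℂ) (c : ℂ) :
    Dl r ((c • a) :: l) = c * Dl r (a :: l) := by
  unfold Dl
  by_cases hl : ((c • a) :: l).length = r
  · have hl' : (a :: l).length = r := by simpa using hl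
    rw [dif_pos hl, dif_pos hl']
    have h0 : 0 < r := by simp at hl; omega
    have key : ∀ (x : Fin r → ℂ) (hx : (x :: l).length = r),
        (Matrix.of fun i : Fin r => (x :: l).get (i.cast hx.symm)) =
        (Matrix.of fun i : Fin r => (a :: l).get (i.cast hl'.symm)).updateRow ⟨0, h0⟩ x := by
      intro x hx
      ext i j
      rw [Matrix.updateRow_apply]
      split_ifs with h
      · subst h; simp
      · obtain ⟨i, hi⟩ := i
        cases i with
        | zero => simp at h
        | succ t => simp
    rw [key (c • a) hl, Matrix.det_updateRow_smul, ← key a hl']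
  · have hl' : ¬ (a :: l).length = r := by simpa using hl
    rw [dif_neg hl, dif_neg hl']; simp

theorem det_pl {m : ℕ} (S : Fin m → Fin (m+2) → ℂ) (x u v w : Fin (m+2) → ℂ) :
    let E := fun a b : Fin (m+2) → ℂ => Matrix.det (Matrix.of (Fin.cons a (Fin.cons b S) : Fin (m+2) → Fin (m+2) → ℂ))
    E x u * E v w - E x v * E u w + E x w * E u v = 0 := by
  intro E
  let M : Matrix (Fin (m+2)) (Fin (m+2)) ℂ := Matrix.of (Fin.cons x (Fin.cons u S))
  let N : Matrix (Fin (m+2)) (Fin (m+2)) ℂ := Matrix.of (Fin.cons 0 (Fin.cons w S))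
  have hc := Matrix.mulVec_cramer (Matrix.transpose M) v
  have hN : ∀ z, (N.updateRow 0 z).det = E z w := by
    intro z
    simp only [E]
    congr 1
    ext i j
    refine Fin.cases ?_ (fun i => ?_) i <;> simp [N, Matrix.updateRow_apply]
  have hM0 : (M.updateRow 0 v).det = E v u := by
    simp only [E]
    congr 1
    ext i j
    refine Fin.cases ?_ (fun i => ?_) i <;> simp [M, Matrix.updateRow_apply]
  have hM1 : (M.updateRow 1 v).det = E x v := by
    simp only [E]
    congr 1
    ext i j
    refine Fin.cases ?_ (fun i => Fin.cases ?_ (fun i => ?_) i) i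
    · simp [M, Matrix.updateRow_apply]
    · simp [M, Matrix.updateRow_apply]
    · simp [M, Matrix.updateRow_apply, Fin.ext_iff]
  let L : (Fin (m+2) → ℂ) →ₗ[ℂ] ℂ :=
    { toFun := fun z => (N.updateRow 0 z).det
      map_add' := fun a b => Matrix.det_updateRow_add N 0 a b
      map_smul' := fun c a => Matrix.det_updateRow_smul N 0 c a }
  have hL : ∀ z, L z = E z w := hN
  have hcv : M.det • v = ∑ i, (M.updateRow i v).det • M i := by
    rw [Matrix.det_transpose] at hc
    rw [← hc]
    ext j
    simp only [Matrix.mulVec, dotProduct, Matrix.transpose_apply, Matrix.cramer_transpose_apply,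
      Finset.sum_apply, Pi.smul_apply, smul_eq_mul]
    exact Finset.sum_congr rfl fun i _ => mul_comm _ _
  have h2 := congrArg L hcv
  rw [map_smul, map_sum, Fin.sum_univ_succ, Fin.sum_univ_succ] at h2
  have hsm : ∀ (c : ℂ) z, L (c • z) = c * E z w := fun c z => by
    rw [map_smul, hL, smul_eq_mul]
  simp only [hsm, hL, smul_eq_mul] at h2
  rw [Finset.sum_eq_zero (s := Finset.univ), Fin.succ_zero_eq_one, hM0, hM1] at h2
  · have e1 : M.det = E x u := rfl
    have e2 : M 0 = x := rfl
    have e3 : M 1 = u := rfl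
    have e4 : E v u = - E u v := by
      have := Matrix.det_permute (Equiv.swap 0 1) (Matrix.of (Fin.cons u (Fin.cons v S) : Fin (m+2) → Fin (m+2) → ℂ))
      rw [Equiv.Perm.sign_swap (by simp)] at this
      simp only [Units.val_neg, Units.val_one, Int.cast_neg, Int.cast_one, neg_mul, one_mul] at this
      simp only [E]
      rw [← this]
      congr 1
      ext i j
      refine Fin.cases ?_ (fun i => Fin.cases ?_ (fun i => ?_) i) i
      · simp
      · simp
      · rw [Matrix.submatrix_apply, Equiv.swap_apply_of_ne_of_ne (by simp [Fin.ext_iff]) (by simp [Fin.ext_iff])]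
        simp
    rw [e1, e2, e3, e4] at h2
    linear_combination h2
  · intro i _
    have : E (M i.succ.succ) w = 0 := by
      refine Matrix.det_zero_of_row_eq (i := 0) (j := i.succ.succ) ?_ ?_
      · simp [Fin.ext_iff]
      · ext t; simp [M]
    rw [this, mul_zero]

theorem Dl_base {r : ℕ} (S : List (Fin r → ℂ)) (x u v w : Fin r → ℂ) :
    Dl r (x :: u :: S) * Dl r (v :: w :: S) - Dl r (x :: v :: S) * Dl r (u :: w :: S)
      + Dl r (x :: w :: S) * Dl r (u :: v :: S) = 0 := by
  by_cases h : S.length + 2 = r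
  · obtain ⟨m, rfl⟩ : ∃ m, r = m + 2 := ⟨r - 2, by omega⟩
    have hS : S.length = m := by omega
    have key : ∀ a b, Dl (m+2) (a :: b :: S) = Matrix.det (Matrix.of (Fin.cons a (Fin.cons b
        (fun i : Fin m => S.get (i.cast hS.symm))) : Fin (m+2) → Fin (m+2) → ℂ)) := by
      intro a b
      unfold Dl
      rw [dif_pos (by simpa using hS)]
      congr 1
      ext i j
      refine Fin.cases ?_ (fun i => Fin.cases ?_ (fun i => ?_) i) i <;> rfl
    simp only [key]
    exact det_pl _ x u v w
  · have : ∀ a b, Dl r (a :: b :: S) = 0 := fun a b => Dl_of_ne (by simpa using h)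
    simp [this]

theorem Dl_front {r : ℕ} (P Q R : List (Fin r → ℂ)) (a b : Fin r → ℂ) :
    Dl r (P ++ (a :: (Q ++ b :: R))) =
      (-1) ^ Q.length * Dl r (a :: b :: (P ++ (Q ++ R))) := by
  have h1 := Dl_move P [] (Q ++ b :: R) a
  have h2 := Dl_move (P ++ Q) [a] R b
  simp only [List.nil_append, List.singleton_append, List.append_assoc, List.length_append,
    List.cons_append] at h1 h2
  rw [h1, h2, ← mul_assoc, ← pow_add]
  congr 1
  rw [← add_assoc, pow_add, ← two_mul, pow_mul]; simp

/-- general three-term relation -/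
theorem Dl_three {r : ℕ} (B0 B1 B2 B3 B4 : List (Fin r → ℂ)) (α β γ δ : Fin r → ℂ) :
    Dl r (B0 ++ (α :: (B1 ++ β :: (B2 ++ (B3 ++ B4))))) *
      Dl r (B0 ++ (B1 ++ (B2 ++ (γ :: (B3 ++ δ :: B4))))) -
    Dl r (B0 ++ (α :: (B1 ++ (B2 ++ γ :: (B3 ++ B4))))) *
      Dl r (B0 ++ (B1 ++ (β :: (B2 ++ (B3 ++ δ :: B4))))) +
    Dl r (B0 ++ (α :: (B1 ++ (B2 ++ (B3 ++ δ :: B4))))) *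
      Dl r (B0 ++ (B1 ++ (β :: (B2 ++ γ :: (B3 ++ B4))))) = 0 := by
  have h1 := Dl_front B0 B1 (B2 ++ (B3 ++ B4)) α β
  have h2 := Dl_front (B0 ++ (B1 ++ B2)) B3 B4 γ δ
  have h3 := Dl_front B0 (B1 ++ B2) (B3 ++ B4) α γ
  have h4 := Dl_front (B0 ++ B1) (B2 ++ B3) B4 β δ
  have h5 := Dl_front B0 (B1 ++ (B2 ++ B3)) B4 α δ
  have h6 := Dl_front (B0 ++ B1) B2 (B3 ++ B4) β γ
  simp only [List.append_assoc, List.length_append] at h1 h2 h3 h4 h5 h6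
  rw [h1, h2, h3, h4, h5, h6]
  have hb := Dl_base (B0 ++ (B1 ++ (B2 ++ (B3 ++ B4)))) α β γ δ
  simp only [pow_add]
  have hsq : ((-1:ℂ) ^ B2.length) * ((-1) ^ B2.length) = 1 := by
    rw [← mul_pow]; simp
  linear_combination ((-1:ℂ) ^ B1.length * (-1) ^ B3.length) * hb +
    (-(-1:ℂ) ^ B1.length * (-1) ^ B3.length * Dl r (α :: γ :: (B0 ++ (B1 ++ (B2 ++ (B3 ++ B4))))) *
      Dl r (β :: δ :: (B0 ++ (B1 ++ (B2 ++ (B3 ++ B4))))) + (-1:ℂ) ^ B1.length * (-1) ^ B3.length *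
      Dl r (α :: δ :: (B0 ++ (B1 ++ (B2 ++ (B3 ++ B4))))) *
      Dl r (β :: γ :: (B0 ++ (B1 ++ (B2 ++ (B3 ++ B4)))))) * hsq

noncomputable def fcol (n r : ℕ) (A : Matrix (Fin r) (ZMod n) ℂ) (t : ℤ) : Fin r → ℂ :=
  fun j => ((-1 : ℂ) ^ (r - 1)) ^ ((t - 1) / (n : ℤ)) * A j (t : ZMod n)

noncomputable def Dz (n r : ℕ) (A : Matrix (Fin r) (ZMod n) ℂ) (l : List ℤ) : ℂ :=
  Dl r (l.map (fcol n r A))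

theorem fcol_add {n r : ℕ} (hn : 0 < n) (A : Matrix (Fin r) (ZMod n) ℂ) (t : ℤ) :
    fcol n r A (t + n) = ((-1 : ℂ) ^ (r - 1)) • fcol n r A t := by
  ext j
  have h0 : ((-1 : ℂ) ^ (r - 1)) ≠ 0 := pow_ne_zero _ (by simp)
  have : (t + n - 1) / (n : ℤ) = (t - 1) / n + 1 := by
    rw [show t + (n : ℤ) - 1 = (t - 1) + 1 * n by ring, Int.add_mul_ediv_right _ _ (by omega)]
  simp only [fcol, this, Pi.smul_apply, smul_eq_mul, zpow_add₀ h0, zpow_one]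
  push_cast
  simp only [ZMod.natCast_self, add_zero]
  ring

theorem Dz_rot {n r : ℕ} (hn : 0 < n) (A : Matrix (Fin r) (ZMod n) ℂ) (x : ℤ) (l : List ℤ)
    (hl : l.length + 1 = r) : Dz n r A (l ++ [x + n]) = Dz n r A (x :: l) := by
  unfold Dz
  have h := Dl_move (l.map (fcol n r A)) [] [] (fcol n r A (x + n))
  simp only [List.nil_append, List.append_nil, List.length_map] at h
  have hl2 : r - 1 = l.length := by omega
  rw [List.map_append, List.map_cons, List.map_nil, h, fcol_add hn, Dl_smul, List.map_cons,
    ← mul_assoc, hl2, ← mul_pow]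
  simp

theorem Dz_wrap_zero {n r : ℕ} (hn : 0 < n) (A : Matrix (Fin r) (ZMod n) ℂ) (x : ℤ) (l : List ℤ) :
    Dz n r A (x :: (l ++ [x + n])) = 0 := by
  unfold Dz
  have h := Dl_move ((x :: l).map (fcol n r A)) [] [] (fcol n r A (x + n))
  simp only [List.nil_append, List.append_nil, List.length_map, List.map_cons,
    List.cons_append] at h
  rw [List.map_cons, List.map_append, List.map_cons, List.map_nil, h, fcol_add hn, Dl_smul,
    Dl_not_nodup (by simp)]
  simp

theorem Dz_base {n r : ℕ} (hn : 0 < n) (A : Matrix (Fin r) (ZMod n) ℂ) (l : List ℤ)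
    (hs : l.Pairwise (· < ·)) (hl : l.length = r) (hw : ∀ t ∈ l, 0 < t ∧ t ≤ n)
    (T : Finset (ZMod n)) (hT : ∀ z, z ∈ T ↔ ∃ t ∈ l, ((t : ℤ) : ZMod n) = z) :
    Dz n r A l = plucker n r A T := by
  haveI : NeZero n := ⟨by omega⟩
  have hval : ∀ t ∈ l, (((t : ℤ) : ZMod n) - 1).val = (t - 1).toNat := by
    intro t ht
    obtain ⟨h1, h2⟩ := hw t ht
    have : ((t : ℤ) : ZMod n) - 1 = (((t - 1).toNat : ℕ) : ZMod n) := by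
      have h3 : (((t - 1).toNat : ℕ) : ℤ) = t - 1 := by omega
      have := congrArg (fun z : ℤ => (z : ZMod n)) h3
      simp only [Int.cast_natCast] at this
      rw [this]; push_cast; ring
    rw [this, ZMod.val_natCast_of_lt (by omega)]
  let g : Fin r → ℕ := fun i => (l.get (i.cast hl.symm) - 1).toNat
  have hg : StrictMono g := by
    intro i j hij
    have h1 : l.get (i.cast hl.symm) < l.get (j.cast hl.symm) :=
      List.pairwise_iff_get.1 hs _ _ (by simpa using hij)
    have h2 := hw _ (List.get_mem l (i.cast hl.symm))
    simp only [g]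
    omega
  have himg : T.image (fun x => (x - 1).val) = Finset.univ.image g := by
    ext z
    simp only [Finset.mem_image, Finset.mem_univ, true_and, hT]
    constructor
    · rintro ⟨_, ⟨t, ht, rfl⟩, rfl⟩
      obtain ⟨i, rfl⟩ := List.get_of_mem ht
      exact ⟨i.cast hl, by simp only [g]; rw [hval _ ht]; simp⟩
    · rintro ⟨i, rfl⟩
      exact ⟨_, ⟨_, List.get_mem l (i.cast hl.symm), rfl⟩, hval _ (List.get_mem l _)⟩
  have hcard : (T.image (fun x => (x - 1).val)).card = r := by
    rw [himg, Finset.card_image_of_injective _ hg.injective]; simp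
  have huniq := Finset.orderEmbOfFin_unique hcard (f := g)
    (fun i => by rw [himg]; exact Finset.mem_image_of_mem _ (Finset.mem_univ _)) hg
  unfold plucker Dz Dl
  rw [dif_pos hcard, dif_pos (by simpa using hl), ← Matrix.det_transpose]
  congr 1
  ext j i
  have e1 : ((T.image (fun x => (x - 1).val)).orderIsoOfFin hcard i : ℕ) = g i := by
    rw [huniq]; rfl
  simp only [Matrix.transpose_apply, Matrix.of_apply, Matrix.submatrix_apply, id, e1]
  have hm := List.get_mem l (i.cast hl.symm)
  obtain ⟨h1, h2⟩ := hw _ hm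
  simp only [List.get_eq_getElem, List.getElem_map, Fin.val_cast, fcol, g] at h1 h2 ⊢
  rw [Int.ediv_eq_zero_of_lt (by omega) (by omega), zpow_zero, one_mul]
  congr 1
  set t := l[i.val]'(by omega) with htdef
  have h3 : (((t - 1).toNat : ℕ) : ℤ) = t - 1 := by omega
  have := congrArg (fun z : ℤ => (z : ZMod n)) h3
  simp only [Int.cast_natCast] at this
  rw [this]; push_cast; ring

theorem Dz_window {n r : ℕ} (hn : 0 < n) (hr : 0 < r) (A : Matrix (Fin r) (ZMod n) ℂ) (m : ℤ) :
    ∀ (l : List ℤ)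
    (_ : l.Pairwise (· < ·)) (_ : l.length = r) (_ : ∀ t ∈ l, m < t ∧ t ≤ m + n)
    (T : Finset (ZMod n)) (_ : ∀ z, z ∈ T ↔ ∃ t ∈ l, ((t : ℤ) : ZMod n) = z),
    Dz n r A l = plucker n r A T := by
  induction m using Int.induction_on with
  | zero =>
    intro l hs hl hw T hT
    exact Dz_base hn A l hs hl (by simpa using hw) T hT
  | succ m ih =>
    intro l hs hl hw T hT
    rcases List.eq_nil_or_concat l with rfl | ⟨l', x, rfl⟩
    · simp at hl; omega
    simp only [List.concat_eq_append] at *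
    simp only [List.pairwise_append, List.mem_append, List.mem_singleton, List.pairwise_singleton] at hs hw
    by_cases hx : x ≤ m + n
    · refine ih _ ?_ hl ?_ T hT
      · simpa [List.pairwise_append] using hs
      · intro t ht
        rw [List.mem_append, List.mem_singleton] at ht
        have := hw t ht
        rcases ht with ht | rfl
        · have := hs.2.2 t ht x rfl
          omega
        · omega
    · have hx2 := hw x (Or.inr rfl)
      have hr' := Dz_rot hn A (x - n) l' (by simpa using hl)
      rw [sub_add_cancel] at hr'
      rw [hr']
      refine ih _ ?_ (by simpa using hl) ?_ T ?_
      · rw [List.pairwise_cons]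
        refine ⟨fun t ht => ?_, hs.1⟩
        have := hw t (Or.inl ht)
        omega
      · intro t ht
        rw [List.mem_cons] at ht
        rcases ht with rfl | ht
        · omega
        · have := hw t (Or.inl ht)
          have := hs.2.2 t ht x rfl
          omega
      · intro z
        rw [hT]
        simp [or_comm]
  | pred m ih =>
    intro l hs hl hw T hT
    rcases l with _ | ⟨x, l'⟩
    · simp at hl; omega
    simp only [List.pairwise_cons, List.mem_cons] at hs hw
    by_cases hx : -m < x
    · refine ih _ ?_ hl ?_ T hT
      · simpa using hs
      · intro t ht
        rw [List.mem_cons] at ht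
        have := hw t ht
        rcases ht with rfl | ht
        · omega
        · have := hs.1 t ht
          omega
    · have hx2 := hw x (Or.inl rfl)
      rw [← Dz_rot hn A x l' (by simpa using hl)]
      refine ih _ ?_ (by simpa using hl) ?_ T ?_
      · rw [List.pairwise_append]
        refine ⟨hs.2, by simp, fun t ht y hy => ?_⟩
        rw [List.mem_singleton] at hy
        have := hw t (Or.inr ht)
        omega
      · intro t ht
        rw [List.mem_append, List.mem_singleton] at ht
        rcases ht with ht | rfl
        · have := hw t (Or.inr ht)
          have := hs.1 t ht
          omega
        · omega
      · intro z
        rw [hT]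
        simp [or_comm]

/-- integer interval list -/
def iv (s : ℤ) (m : ℕ) : List ℤ := (List.range m).map (fun t : ℕ => s + (t : ℤ))

theorem iv_length (s : ℤ) (m : ℕ) : (iv s m).length = m := by simp [iv]

theorem mem_iv (s : ℤ) (m : ℕ) (t : ℤ) : t ∈ iv s m ↔ s ≤ t ∧ t < s + m := by
  simp only [iv, List.mem_map, List.mem_range]
  constructor
  · rintro ⟨a, h, rfl⟩; omega
  · rintro ⟨h1, h2⟩; exact ⟨(t - s).toNat, by omega, by omega⟩

theorem iv_pairwise (s : ℤ) (m : ℕ) : (iv s m).Pairwise (· < ·) := by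
  unfold iv
  rw [List.pairwise_map]
  exact List.pairwise_lt_range.imp (by intro a b h; omega)

theorem iv_zero (s : ℤ) : iv s 0 = [] := rfl

theorem iv_succ (s : ℤ) (m : ℕ) : iv s (m + 1) = iv s m ++ [s + m] := by
  simp [iv, List.range_succ]

theorem iv_cons (s : ℤ) (m : ℕ) : iv s (m + 1) = s :: iv (s + 1) m := by
  simp only [iv, List.range_succ_eq_map, List.map_cons, List.map_map]
  congr 1
  · simp
  · apply List.map_congr_left; intro a _; simp; ring

theorem zcast_inj {n : ℕ} {s t : ℤ} (h : ((s : ℤ) : ZMod n) = ((t : ℤ) : ZMod n))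
    (h1 : s - t < n) (h2 : t - s < n) : s = t := by
  rw [ZMod.intCast_eq_intCast_iff_dvd_sub] at h
  obtain ⟨c, hc⟩ := h
  have hn : (0:ℤ) < n := by omega
  have h3 : c < 1 := by
    by_contra h4; push Not at h4
    nlinarith
  have h4 : -1 < c := by
    by_contra h4; push Not at h4
    nlinarith
  have : c = 0 := by omega
  subst this; simp at hc; omega

theorem mem_seg {n m : ℕ} (z : ZMod n) :
    z ∈ seg n m ↔ ∃ t : ℤ, 1 ≤ t ∧ t ≤ m ∧ ((t : ℤ) : ZMod n) = z := by
  simp only [seg, Finset.mem_image, Finset.mem_Icc]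
  constructor
  · rintro ⟨t, ⟨h1, h2⟩, rfl⟩; exact ⟨t, by omega, by omega, by simp⟩
  · rintro ⟨t, h1, h2, rfl⟩
    obtain ⟨t, rfl⟩ := Int.eq_ofNat_of_zero_le (by omega : 0 ≤ t)
    exact ⟨t, by omega, by simp⟩

theorem ych_eq {n k : ℕ} (hn : 0 < n) (hkn : k < n) (A : Matrix (Fin (n - k)) (ZMod n) ℂ)
    (a b : ℕ) (ha : a ≤ n - k) (hb : b ≤ k) (s : ℤ) (hs : s = ((a + b + 1) / 2 : ℤ)) :
    ych k n A a b = Dz n (n - k) A (iv (1 - s) a ++ iv (a + b + 1 - s) (n - k - a)) := by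
  symm
  apply Dz_window hn (by omega) A (-s)
  · rw [List.pairwise_append]
    refine ⟨iv_pairwise _ _, iv_pairwise _ _, ?_⟩
    intro x hx y hy
    rw [mem_iv] at hx hy
    omega
  · simp [iv_length]; omega
  · intro t ht
    rw [List.mem_append, mem_iv, mem_iv] at ht
    omega
  · intro z
    have hS : ((((a + b + 1) / 2 : ℕ)) : ZMod n) = ((s : ℤ) : ZMod n) := by
      have : (((a + b + 1) / 2 : ℕ) : ℤ) = s := by subst hs; push_cast; rfl
      rw [← this, Int.cast_natCast]
    simp only [Jch, Finset.mem_image, Finset.mem_union, Finset.mem_sdiff, mem_seg, List.mem_append,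
      mem_iv, hS]
    constructor
    · rintro ⟨x, h | ⟨⟨t, h1, h2, rfl⟩, h3⟩, rfl⟩
      · obtain ⟨t, h1, h2, rfl⟩ := h
        exact ⟨t - s, by omega, by push_cast; ring⟩
      · refine ⟨t - s, Or.inr ?_, by push_cast; ring⟩
        have : ¬ (t ≤ ((a + b : ℕ) : ℤ)) := fun h4 => h3 ⟨t, h1, h4, rfl⟩
        omega
    · rintro ⟨t, h | h, rfl⟩
      · exact ⟨((t + s : ℤ) : ZMod n), Or.inl ⟨t + s, by omega, by omega, rfl⟩, by push_cast; ring⟩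
      · refine ⟨((t + s : ℤ) : ZMod n), Or.inr ⟨⟨t + s, by omega, by omega, rfl⟩, ?_⟩, by push_cast; ring⟩
        rintro ⟨u, h1, h2, h3⟩
        have := zcast_inj h3 (by omega) (by omega)
        omega

theorem Jcyc_eq {n k : ℕ} (hn : 0 < n) (hkn : k < n) (A : Matrix (Fin (n - k)) (ZMod n) ℂ)
    (a : ℕ) (ha : a ≤ n - k) (x : ℤ) (i : ZMod n) (hi : i = ((x + a - 1 + k : ℤ) : ZMod n)) :
    Dz n (n - k) A (iv x a ++ iv (x + a + k) (n - k - a)) = plucker n (n - k) A (Jcyc n k i) := by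
  apply Dz_window hn (by omega) A (x - 1)
  · rw [List.pairwise_append]
    refine ⟨iv_pairwise _ _, iv_pairwise _ _, ?_⟩
    intro x hx y hy
    rw [mem_iv] at hx hy
    omega
  · simp [iv_length]; omega
  · intro t ht
    rw [List.mem_append, mem_iv, mem_iv] at ht
    omega
  · intro z
    subst hi
    simp only [Jcyc, Finset.mem_image, Finset.mem_Icc, List.mem_append, mem_iv]
    constructor
    · rintro ⟨t, ⟨h1, h2⟩, rfl⟩
      by_cases h : (t : ℤ) + a ≤ n - k
      · exact ⟨x + a - 1 + k + t, by omega, by push_cast; ring⟩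
      · exact ⟨x + a - 1 + k + t - n, by omega, by push_cast; simp⟩
    · rintro ⟨t, h | h, rfl⟩
      · have hh : (((t - (x + a - 1 + k) + n).toNat : ℕ) : ℤ) = t - (x + a - 1 + k) + n := by omega
        refine ⟨(t - (x + a - 1 + k) + n).toNat, by omega, ?_⟩
        have := congrArg (fun z : ℤ => (z : ZMod n)) hh
        simp only [Int.cast_natCast] at this
        rw [this]; push_cast; simp
      · have hh : (((t - (x + a - 1 + k)).toNat : ℕ) : ℤ) = t - (x + a - 1 + k) := by omega
        refine ⟨(t - (x + a - 1 + k)).toNat, by omega, ?_⟩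
        have := congrArg (fun z : ℤ => (z : ZMod n)) hh
        simp only [Int.cast_natCast] at this
        rw [this]; push_cast; ring

theorem mem_Jplus {n k : ℕ} (hkn : k < n) (i : ℤ) (z : ZMod n) :
    z ∈ Jplus n k (i : ZMod n) ↔ ∃ t : ℤ, ((1 ≤ t ∧ t < n - k) ∨ t = n - k + 1) ∧
      ((i + t : ℤ) : ZMod n) = z := by
  have e1 : (((n - k + 1 : ℕ)) : ZMod n) = ((n - k + 1 : ℤ) : ZMod n) := by
    rw [show ((n:ℤ) - k + 1) = ((n - k + 1 : ℕ) : ℤ) by omega, Int.cast_natCast]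
  have e2 : (((n - k : ℕ)) : ZMod n) = ((n - k : ℤ) : ZMod n) := by
    rw [show ((n:ℤ) - k) = ((n - k : ℕ) : ℤ) by omega, Int.cast_natCast]
  simp only [Jplus, Jcyc, Finset.mem_insert, Finset.mem_erase, Finset.mem_image, Finset.mem_Icc, e1, e2]
  constructor
  · rintro (rfl | ⟨h, t, ⟨h1, h2⟩, rfl⟩)
    · exact ⟨n - k + 1, Or.inr rfl, by push_cast; ring⟩
    · refine ⟨t, Or.inl ⟨by omega, ?_⟩, by push_cast; ring⟩
      by_contra h3
      apply h
      have : (t : ℤ) = n - k := by omega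
      rw [← this]; simp
  · rintro ⟨t, ⟨h1, h2⟩ | rfl, rfl⟩
    · right
      refine ⟨?_, t.toNat, by omega, ?_⟩
      · intro h
        rw [← Int.cast_add] at h
        have := zcast_inj h (by omega) (by omega)
        omega
      · obtain ⟨t, rfl⟩ := Int.eq_ofNat_of_zero_le (by omega : 0 ≤ t)
        simp
    · left; push_cast; ring

theorem Jplus_eq {n k : ℕ} (hn : 0 < n) (hkn : k < n) (hk : 1 < k)
    (A : Matrix (Fin (n - k)) (ZMod n) ℂ)
    (a : ℕ) (ha : a < n - k) (x : ℤ) (i : ZMod n) (hi : i = ((x + a + k : ℤ) : ZMod n)) :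
    Dz n (n - k) A (iv x a ++ (x + a + 1) :: iv (x + a + 1 + k) (n - k - a - 1)) =
      plucker n (n - k) A (Jplus n k i) := by
  apply Dz_window hn (by omega) A (if a = 0 then x else x - 1)
  · rw [List.pairwise_append, List.pairwise_cons]
    refine ⟨iv_pairwise _ _, ⟨?_, iv_pairwise _ _⟩, ?_⟩
    · intro y hy
      rw [mem_iv] at hy
      omega
    · intro x hx y hy
      rw [List.mem_cons] at hy
      rw [mem_iv] at hx hy
      omega
  · simp [iv_length]; omega
  · intro t ht
    rw [List.mem_append, List.mem_cons, mem_iv, mem_iv] at ht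
    split_ifs <;> omega
  · intro z
    subst hi
    simp only [mem_Jplus hkn, List.mem_append, List.mem_cons, mem_iv]
    constructor
    · rintro ⟨t, h, rfl⟩
      by_cases h : (t : ℤ) + a < n - k
      · exact ⟨x + a + k + t, by omega, by push_cast; ring⟩
      · exact ⟨x + a + k + t - n, by omega, by push_cast; simp⟩
    · rintro ⟨t, h, rfl⟩
      by_cases h : t > x + a + 1
      · exact ⟨t - (x + a + k), by omega, by push_cast; ring⟩
      · exact ⟨t - (x + a + k) + n, by omega, by push_cast; simp⟩

theorem Dz_three {n r : ℕ} (A : Matrix (Fin r) (ZMod n) ℂ) (B0 B1 B2 B3 B4 : List ℤ)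
    (α β γ δ : ℤ) :
    Dz n r A (B0 ++ (α :: (B1 ++ β :: (B2 ++ (B3 ++ B4))))) *
      Dz n r A (B0 ++ (B1 ++ (B2 ++ (γ :: (B3 ++ δ :: B4))))) -
    Dz n r A (B0 ++ (α :: (B1 ++ (B2 ++ γ :: (B3 ++ B4))))) *
      Dz n r A (B0 ++ (B1 ++ (β :: (B2 ++ (B3 ++ δ :: B4))))) +
    Dz n r A (B0 ++ (α :: (B1 ++ (B2 ++ (B3 ++ δ :: B4))))) *
      Dz n r A (B0 ++ (B1 ++ (β :: (B2 ++ γ :: (B3 ++ B4))))) = 0 := by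
  unfold Dz
  simp only [List.map_append, List.map_cons]
  exact Dl_three _ _ _ _ _ _ _ _ _

theorem stepEA {n r : ℕ} (A : Matrix (Fin r) (ZMod n) ℂ) (X Y : ℤ) (a p : ℕ) :
    Dz n r A (iv X (a+1) ++ (X+a+2) :: iv Y p) * Dz n r A (iv (X+1) (a+1) ++ iv Y (p+1))
    - Dz n r A (iv (X+1) a ++ (X+a+2) :: iv Y (p+1)) * Dz n r A (iv X (a+2) ++ iv Y p)
    = Dz n r A (iv X (a+1) ++ iv Y (p+1)) * Dz n r A (iv (X+1) (a+2) ++ iv Y p) := by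
  have h := Dz_three A [] (iv (X+1) a) [] (iv Y p) [] X (X+1+a) (X+a+2) (Y+p)
  have e1 : iv X (a+1) = X :: iv (X+1) a := iv_cons _ _
  have e2 : iv (X+1) (a+1) = iv (X+1) a ++ [X+1+a] := iv_succ _ _
  have e3 : iv X (a+2) = X :: (iv (X+1) a ++ [X+1+a]) := by rw [iv_cons, e2]
  have e4 : iv Y (p+1) = iv Y p ++ [Y+p] := iv_succ _ _
  have e5 : iv (X+1) (a+2) = iv (X+1) a ++ [X+1+a, X+a+2] := by
    rw [iv_succ, e2, List.append_assoc]; simp; ring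
  rw [e1, e2, e3, e4, e5]
  simp only [List.append_assoc, List.cons_append, List.nil_append, List.append_nil] at h ⊢
  linear_combination -h

theorem stepEB {n r : ℕ} (A : Matrix (Fin r) (ZMod n) ℂ) (X Y : ℤ) (a p : ℕ) :
    Dz n r A (iv X a ++ (X+a+1) :: iv (Y+1) (p+1)) * Dz n r A (iv X (a+1) ++ iv Y (p+1))
    - Dz n r A (iv X a ++ (X+a+1) :: iv Y (p+1)) * Dz n r A (iv X (a+1) ++ iv (Y+1) (p+1))
    = Dz n r A (iv X a ++ iv Y (p+2)) * Dz n r A (iv X (a+2) ++ iv (Y+1) p) := by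
  have h := Dz_three A (iv X a) [] [] (iv (Y+1) p) [] (X+a) (X+a+1) Y (Y+1+p)
  have e1 : iv X (a+1) = iv X a ++ [X+a] := iv_succ _ _
  have e2 : iv (Y+1) (p+1) = iv (Y+1) p ++ [Y+1+p] := iv_succ _ _
  have e3 : iv Y (p+2) = Y :: (iv (Y+1) p ++ [Y+1+p]) := by rw [iv_cons, e2]
  have e4 : iv Y (p+1) = Y :: iv (Y+1) p := iv_cons _ _
  have e5 : iv X (a+2) = iv X a ++ [X+a, X+a+1] := by
    rw [iv_succ, e1, List.append_assoc]; simp; ring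
  rw [e1, e3, e4, e5, e2]
  simp only [List.append_assoc, List.cons_append, List.nil_append, List.append_nil] at h ⊢
  linear_combination -h

theorem stepOA {n r : ℕ} (A : Matrix (Fin r) (ZMod n) ℂ) (X Y : ℤ) (a p : ℕ) :
    Dz n r A (iv X a ++ (iv Y (p+1) ++ [Y+p+2])) * Dz n r A (iv X (a+1) ++ iv (Y+1) (p+1))
    - Dz n r A (iv X (a+1) ++ (iv (Y+1) p ++ [Y+p+2])) * Dz n r A (iv X a ++ iv Y (p+2))
    = Dz n r A (iv X a ++ iv (Y+1) (p+2)) * Dz n r A (iv X (a+1) ++ iv Y (p+1)) := by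
  have h := Dz_three A (iv X a) [] (iv (Y+1) p) [] [] (X+a) Y (Y+1+p) (Y+p+2)
  have e1 : iv X (a+1) = iv X a ++ [X+a] := iv_succ _ _
  have e2 : iv (Y+1) (p+1) = iv (Y+1) p ++ [Y+1+p] := iv_succ _ _
  have e3 : iv Y (p+2) = Y :: (iv (Y+1) p ++ [Y+1+p]) := by rw [iv_cons, e2]
  have e4 : iv Y (p+1) = Y :: iv (Y+1) p := iv_cons _ _
  have e5 : iv (Y+1) (p+2) = iv (Y+1) p ++ [Y+1+p, Y+p+2] := by
    rw [iv_succ, e2, List.append_assoc]; simp; ring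
  rw [e1, e3, e4, e5, e2]
  simp only [List.append_assoc, List.cons_append, List.nil_append, List.append_nil] at h ⊢
  linear_combination -h

theorem stepOB {n r : ℕ} (A : Matrix (Fin r) (ZMod n) ℂ) (X Y : ℤ) (a p : ℕ) :
    Dz n r A (iv (X+1) (a+1) ++ (iv Y p ++ [Y+p+1])) * Dz n r A (iv X (a+1) ++ iv Y (p+1))
    - Dz n r A (iv X (a+1) ++ (iv Y p ++ [Y+p+1])) * Dz n r A (iv (X+1) (a+1) ++ iv Y (p+1))
    = Dz n r A (iv (X+1) a ++ iv Y (p+2)) * Dz n r A (iv X (a+2) ++ iv Y p) := by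
  have h := Dz_three A [] (iv (X+1) a) (iv Y p) [] [] X (X+1+a) (Y+p) (Y+p+1)
  have e1 : iv X (a+1) = X :: iv (X+1) a := iv_cons _ _
  have e2 : iv (X+1) (a+1) = iv (X+1) a ++ [X+1+a] := iv_succ _ _
  have e3 : iv X (a+2) = X :: (iv (X+1) a ++ [X+1+a]) := by rw [iv_cons, e2]
  have e4 : iv Y (p+1) = iv Y p ++ [Y+p] := iv_succ _ _
  have e5 : iv Y (p+2) = iv Y p ++ [Y+p, Y+p+1] := by
    rw [iv_succ, e4, List.append_assoc]; simp; ring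
  rw [e1, e2, e3, e4, e5]
  simp only [List.append_assoc, List.cons_append, List.nil_append, List.append_nil] at h ⊢
  linear_combination -h

theorem telescope (r k : ℕ) (hr : 2 ≤ r) (hk : 2 ≤ k) (d : ℤ) (hd1 : 1 - (k:ℤ) ≤ d)
    (hd2 : d ≤ r - 2) (V tA tB : ℕ → ℕ → ℂ) (α β : ℂ)
    (hA : ∀ a b : ℕ, (a : ℤ) - b = d → a < r → 1 ≤ b → b ≤ k - 1 → tA a b = V (a+1) b - V a b)
    (hB : ∀ a b : ℕ, (a : ℤ) - b = d → 1 ≤ a → a ≤ r - 1 → 1 ≤ b → b ≤ k →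
      tB a b = V a b - V a (b-1))
    (h0 : ∀ a b : ℕ, ((a : ℤ) - b = d ∨ (a : ℤ) - b = d + 1) → a ≤ r → b ≤ k → (a = 0 ∨ b = 0) →
      V a b = α)
    (h1 : ∀ a b : ℕ, ((a : ℤ) - b = d ∨ (a : ℤ) - b = d + 1) → a ≤ r → b ≤ k → (a = r ∨ b = k) →
      V a b = β) :
    (∑ p ∈ ((Finset.range r) ×ˢ (Finset.Icc 1 (k - 1))).filter
      (fun p => (p.1 : ℤ) - (p.2 : ℤ) = d), tA p.1 p.2) +
    (∑ p ∈ ((Finset.Icc 1 (r - 1)) ×ˢ (Finset.Icc 1 k)).filter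
      (fun p => (p.1 : ℤ) - (p.2 : ℤ) = d), tB p.1 p.2) = β - α := by
  let F : ℤ → ℕ → ℂ := fun D b => if b = 0 ∨ (b : ℤ) + D ≤ 0 then α
    else if k ≤ b ∨ (r : ℤ) ≤ b + D then β else V ((b : ℤ) + D).toNat b
  have hF : ∀ (a b : ℕ) (D : ℤ), (D = d ∨ D = d + 1) → (a : ℤ) - b = D → a ≤ r → b ≤ k →
      V a b = F D b := by
    intro a b D hD hab ha hb
    simp only [F]
    split_ifs with c1 c2
    · exact h0 a b (by omega) ha hb (by omega)
    · exact h1 a b (by omega) ha hb (by omega)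
    · congr 1; omega
  have hAs : (∑ p ∈ ((Finset.range r) ×ˢ (Finset.Icc 1 (k - 1))).filter
      (fun p => (p.1 : ℤ) - (p.2 : ℤ) = d), tA p.1 p.2) =
      ∑ b ∈ Finset.range k, (F (d+1) b - F d b) := by
    rw [Finset.sum_filter, Finset.sum_product_right]
    have hsub : Finset.Icc 1 (k-1) ⊆ Finset.range k := by
      intro b hb; simp at hb ⊢; omega
    rw [← Finset.sum_subset hsub]
    · apply Finset.sum_congr rfl
      intro b hb
      rw [Finset.mem_Icc] at hb
      by_cases hin : 0 ≤ (b : ℤ) + d ∧ (b : ℤ) + d < r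
      · rw [Finset.sum_eq_single ((b : ℤ) + d).toNat]
        · rw [if_pos (by simp only; omega)]
          rw [hA _ _ (by omega) (by omega) hb.1 hb.2,
            hF _ b (d+1) (Or.inr rfl) (by push_cast; omega) (by omega) (by omega),
            hF _ b d (Or.inl rfl) (by omega) (by omega) (by omega)]
        · intro a _ hne
          rw [if_neg (by simp only; omega)]
        · intro h; exfalso; apply h; rw [Finset.mem_range]; omega
      · rw [Finset.sum_eq_zero]
        · simp only [F]
          split_ifs <;> first | omega | simp
        · intro a ha
          rw [Finset.mem_range] at ha
          rw [if_neg (by simp only; omega)]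
    · intro b hb hb2
      rw [Finset.mem_range] at hb
      rw [Finset.mem_Icc] at hb2
      have : b = 0 := by omega
      subst this
      simp [F]
  have hBs : (∑ p ∈ ((Finset.Icc 1 (r - 1)) ×ˢ (Finset.Icc 1 k)).filter
      (fun p => (p.1 : ℤ) - (p.2 : ℤ) = d), tB p.1 p.2) =
      ∑ b ∈ Finset.range k, (F d (b+1) - F (d+1) b) := by
    rw [Finset.sum_filter, Finset.sum_product_right]
    have hi := Finset.sum_image (f := fun b => F d b - F (d+1) (b-1)) (g := fun b => b + 1)
      (s := Finset.range k) (by intro a _ b _ h; simpa using h)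
    simp only [Nat.add_sub_cancel] at hi
    rw [← hi]
    have himg : (Finset.range k).image (fun b => b + 1) = Finset.Icc 1 k := by
      ext b; simp only [Finset.mem_image, Finset.mem_range, Finset.mem_Icc]
      exact ⟨fun ⟨a, h, h2⟩ => by omega, fun h => ⟨b - 1, by omega, by omega⟩⟩
    rw [himg]
    apply Finset.sum_congr rfl
    intro b hb
    rw [Finset.mem_Icc] at hb
    by_cases hin : 1 ≤ (b : ℤ) + d ∧ (b : ℤ) + d ≤ r - 1
    · rw [Finset.sum_eq_single ((b : ℤ) + d).toNat]
      · rw [if_pos (by simp only; omega)]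
        rw [hB _ _ (by omega) (by omega) (by omega) hb.1 hb.2,
          hF _ (b-1) (d+1) (Or.inr rfl) (by omega) (by omega) (by omega),
          hF _ b d (Or.inl rfl) (by omega) (by omega) (by omega)]
      · intro a _ hne
        rw [if_neg (by simp only; omega)]
      · intro h; exfalso; apply h; rw [Finset.mem_Icc]; omega
    · rw [Finset.sum_eq_zero]
      · simp only [F]
        split_ifs <;> first | omega | simp
      · intro a ha
        rw [Finset.mem_Icc] at ha
        rw [if_neg (by simp only; omega)]
  rw [hAs, hBs, ← Finset.sum_add_distrib]
  rw [Finset.sum_congr rfl (g := fun b => F d (b+1) - F d b) (fun b _ => by ring),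
    Finset.sum_range_sub]
  have f1 : F d k = β := by
    simp only [F]
    rw [if_neg (by omega), if_pos (by omega)]
  have f0 : F d 0 = α := by simp [F]
  rw [f1, f0]

theorem ych_eq2 {n k : ℕ} (hn : 0 < n) (hkn : k < n) (A : Matrix (Fin (n - k)) (ZMod n) ℂ)
    (a b p : ℕ) (X Y : ℤ) (hp : a + p = n - k) (hb : b ≤ k) (hX : X = 1 - ((a + b + 1) / 2 : ℤ))
    (hY : Y = X + a + b) :
    ych k n A a b = Dz n (n - k) A (iv X a ++ iv Y p) := by
  rw [ych_eq hn hkn A a b (by omega) hb _ rfl]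
  rw [show (1 - ((a + b + 1) / 2 : ℤ)) = X by omega,
    show ((a:ℤ) + b + 1 - ((a + b + 1) / 2 : ℤ)) = Y by omega, show n - k - a = p by omega]

noncomputable def numE (n k : ℕ) (A : Matrix (Fin (n - k)) (ZMod n) ℂ) (a b : ℕ) : ℂ :=
  Dz n (n - k) A (iv (1 - ((a + b + 1) / 2 : ℤ)) (a - 1) ++ ((a : ℤ) + 1 - ((a + b + 1) / 2 : ℤ)) ::
    iv ((a:ℤ) + b + 1 - ((a + b + 1) / 2 : ℤ)) (n - k - a))

noncomputable def numO (n k : ℕ) (A : Matrix (Fin (n - k)) (ZMod n) ℂ) (a b : ℕ) : ℂ :=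
  Dz n (n - k) A (iv (1 - ((a + b + 1) / 2 : ℤ)) a ++
    (iv ((a:ℤ) + b + 1 - ((a + b + 1) / 2 : ℤ)) (n - k - a - 1) ++
      [((n - k : ℕ) : ℤ) + b + 1 - ((a + b + 1) / 2 : ℤ)]))

theorem numE_eq {n k : ℕ} (A : Matrix (Fin (n - k)) (ZMod n) ℂ)
    (a b p : ℕ) (X Y Z : ℤ) (hp : a + 1 + p = n - k)
    (hX : X = 1 - ((a + 1 + b + 1) / 2 : ℤ))
    (hY : Y = X + (a + 1) + b) (hZ : Z = X + a + 1) :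
    numE n k A (a + 1) b = Dz n (n - k) A (iv X a ++ Z :: iv Y p) := by
  unfold numE
  push_cast
  rw [show (1 - ((a + 1 + b + 1) / 2 : ℤ)) = X by omega,
    show ((a:ℤ) + 1 + b + 1 - ((a + 1 + b + 1) / 2 : ℤ)) = Y by omega,
    show n - k - (a + 1) = p by omega,
    show ((a:ℤ) + 1 + 1 - ((a + 1 + b + 1) / 2 : ℤ)) = Z by omega]

theorem numE_zero {n k : ℕ} (A : Matrix (Fin (n - k)) (ZMod n) ℂ) (b : ℕ) :
    numE n k A 0 b = 0 := by
  unfold numE Dz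
  apply Dl_of_ne
  simp [iv_length]

theorem numO_eq {n k : ℕ} (A : Matrix (Fin (n - k)) (ZMod n) ℂ)
    (a b p : ℕ) (X Y Z : ℤ) (hp : a + 1 + p = n - k)
    (hX : X = 1 - ((a + b + 1) / 2 : ℤ))
    (hY : Y = X + a + b) (hZ : Z = Y + p + 1) :
    numO n k A a b = Dz n (n - k) A (iv X a ++ (iv Y p ++ [Z])) := by
  unfold numO
  rw [show (1 - ((a + b + 1) / 2 : ℤ)) = X by omega,
    show ((a:ℤ) + b + 1 - ((a + b + 1) / 2 : ℤ)) = Y by omega,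
    show n - k - a - 1 = p by omega,
    show (((n - k : ℕ):ℤ) + b + 1 - ((a + b + 1) / 2 : ℤ)) = Z by omega]

theorem numO_last {n k : ℕ} (A : Matrix (Fin (n - k)) (ZMod n) ℂ) (b : ℕ) :
    numO n k A (n - k) b = 0 := by
  unfold numO Dz
  apply Dl_of_ne
  simp [iv_length]

theorem diag_even {n k : ℕ} (hk : 2 ≤ k) (hkn : k + 2 ≤ n)
    (A : Matrix (Fin (n - k)) (ZMod n) ℂ)
    (hy : ∀ i ≤ n - k, ∀ j ≤ k, ych k n A i j ≠ 0) (e d : ℤ) (hde : d = 2 * e)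
    (hd1 : 1 - (k:ℤ) ≤ d) (hd2 : d ≤ n - k - 2) (i : ZMod n) (hi : i = ((k + e : ℤ) : ZMod n)) :
    sumA k n (ych k n A) d + sumB k n (ych k n A) d =
      plucker n (n - k) A (Jplus n k i) / plucker n (n - k) A (Jcyc n k i) := by
  have hn0 : 0 < n := by omega
  have hkn0 : k < n := by omega
  rw [← sub_zero (_ / _)]
  unfold sumA sumB
  apply telescope (n - k) k (by omega) hk d hd1 (by omega)
    (V := fun a b => numE n k A a b / ych k n A a b)
    (tA := fun a b => (ych k n A a (b + 1) * ych k n A (a + 1) (b - 1)) /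
      (ych k n A a b * ych k n A (a + 1) b))
    (tB := fun a b => (ych k n A (a - 1) b * ych k n A (a + 1) (b - 1)) /
      (ych k n A a (b - 1) * ych k n A a b))
  · intro a b hab ha hb1 hb2
    have y1 := hy a (by omega) b (by omega)
    have y2 := hy (a+1) (by omega) b (by omega)
    obtain ⟨c, rfl⟩ : ∃ c, b = c + 1 := ⟨b - 1, by omega⟩
    simp only [Nat.add_sub_cancel]
    rcases a with _ | a
    · obtain ⟨p, hp⟩ : ∃ p, 0 + 1 + p = n - k := ⟨n - k - 1, by omega⟩
      have q1 : ych k n A 0 (c + 1 + 1) = ych k n A 0 (c + 1) := by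
        rw [ych_eq2 hn0 hkn0 A 0 (c+1+1) (n-k) e (-e+1) (by omega) (by omega) (by omega) (by omega),
          ych_eq2 hn0 hkn0 A 0 (c+1) (n-k) (e+1) (-e+1) (by omega) (by omega) (by omega) (by omega)]
        rfl
      have q2 : ych k n A (0 + 1) c = numE n k A (0 + 1) (c + 1) := by
        rw [ych_eq2 hn0 hkn0 A (0+1) c p (e+1) (-e+1) (by omega) (by omega) (by omega) (by omega),
          numE_eq A 0 (c+1) p e (-e+1) (e+1) (by omega) (by omega) (by omega) (by omega)]
        simp [iv]
      rw [q1, q2, numE_zero]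
      field_simp
      ring
    · obtain ⟨p, hp⟩ : ∃ p, a + 1 + 1 + p = n - k := ⟨n - k - a - 2, by omega⟩
      obtain ⟨X, hX⟩ : ∃ X : ℤ, X = - ((a + 1 + (c + 1)) / 2 : ℤ) := ⟨_, rfl⟩
      obtain ⟨Y, hY⟩ : ∃ Y : ℤ, Y = X + 1 + (a + 1) + (c + 1) := ⟨_, rfl⟩
      have st := stepEA A X Y a p
      rw [← ych_eq2 hn0 hkn0 A (a+1) (c+1) (p+1) (X+1) Y (by omega) (by omega) (by omega) (by omega),
        ← ych_eq2 hn0 hkn0 A (a+1) (c+1+1) (p+1) X Y (by omega) (by omega) (by omega) (by omega),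
        ← ych_eq2 hn0 hkn0 A (a+2) (c+1) p X Y (by omega) (by omega) (by omega) (by omega),
        ← ych_eq2 hn0 hkn0 A (a+2) c p (X+1) Y (by omega) (by omega) (by omega) (by omega),
        ← numE_eq A a (c+1) (p+1) (X+1) Y _ (by omega) (by omega) (by omega) (by omega),
        ← numE_eq A (a+1) (c+1) p X Y _ (by omega) (by omega) (by omega) (by omega)] at st
      rw [div_sub_div _ _ y2 y1, div_eq_div_iff (mul_ne_zero y1 y2) (mul_ne_zero y2 y1)]
      linear_combination (-(ych k n A (a+1) (c+1) * ych k n A (a+1+1) (c+1))) * st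
  · intro a b hab ha1 ha2 hb1 hb2
    have y1 := hy a (by omega) b (by omega)
    have y2 := hy a (by omega) (b-1) (by omega)
    obtain ⟨c, rfl⟩ : ∃ c, b = c + 1 := ⟨b - 1, by omega⟩
    obtain ⟨a, rfl⟩ : ∃ c, a = c + 1 := ⟨a - 1, by omega⟩
    simp only [Nat.add_sub_cancel] at y1 y2 ⊢
    obtain ⟨p, hp⟩ : ∃ p, a + 1 + 1 + p = n - k := ⟨n - k - a - 2, by omega⟩
    obtain ⟨X, hX⟩ : ∃ X : ℤ, X = 1 - ((a + 1 + (c + 1)) / 2 : ℤ) := ⟨_, rfl⟩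
    obtain ⟨Y, hY⟩ : ∃ Y : ℤ, Y = X + (a + 1) + c := ⟨_, rfl⟩
    have st := stepEB A X Y a p
    rw [← ych_eq2 hn0 hkn0 A (a+1) (c+1) (p+1) X (Y+1) (by omega) (by omega) (by omega) (by omega),
      ← ych_eq2 hn0 hkn0 A (a+1) c (p+1) X Y (by omega) (by omega) (by omega) (by omega),
      ← ych_eq2 hn0 hkn0 A a (c+1) (p+2) X Y (by omega) (by omega) (by omega) (by omega),
      ← ych_eq2 hn0 hkn0 A (a+2) c p X (Y+1) (by omega) (by omega) (by omega) (by omega),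
      ← numE_eq A a (c+1) (p+1) X (Y+1) _ (by omega) (by omega) (by omega) (by omega),
      ← numE_eq A a c (p+1) X Y _ (by omega) (by omega) (by omega) (by omega)] at st
    rw [div_sub_div _ _ y1 y2, div_eq_div_iff (mul_ne_zero y2 y1) (mul_ne_zero y1 y2)]
    linear_combination (-(ych k n A (a+1) (c+1) * ych k n A (a+1) c)) * st
  · intro a b hab ha hb h
    rcases a with _ | a
    · simp [numE_zero]
    · have hb0 : b = 0 := by omega
      subst hb0
      obtain ⟨p, hp⟩ : ∃ p, a + 1 + 1 + p = n - k := ⟨n - k - a - 2, by omega⟩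
      have : numE n k A (a+1) 0 = 0 := by
        rw [numE_eq A a 0 (p+1) _ _ _ (by omega) rfl rfl rfl, iv_cons]
        unfold Dz
        apply Dl_not_nodup
        rw [List.map_append, List.map_cons, List.map_cons]
        intro h
        have := (List.nodup_append.1 h).2.1
        rw [List.nodup_cons] at this
        apply this.1
        simp [add_assoc]
      simp [this]
  · intro a b hab ha hb h
    obtain ⟨a, rfl⟩ : ∃ c, a = c + 1 := ⟨a - 1, by omega⟩
    obtain ⟨p, hp⟩ : ∃ p, a + 1 + p = n - k := ⟨n - k - a - 1, by omega⟩
    obtain ⟨X, hX⟩ : ∃ X : ℤ, X = 1 - ((a + 1 + b + 1) / 2 : ℤ) := ⟨_, rfl⟩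
    have hp1 : p = n - k - (a + 1) := by omega
    have hp2 : p = n - k - a - 1 := by omega
    have hii : i = ((X + a + k : ℤ) : ZMod n) := by
      rw [hi]
      rcases h with h | h
      · rw [show X + a + k = k + e by omega]
      · rw [show X + a + k = k + e by omega]
    have g1 := Jcyc_eq hn0 hkn0 A (a+1) ha X i (by rw [hii]; push_cast; ring)
    have g2 := Jplus_eq hn0 hkn0 hk A a ha X i hii
    rw [← hp1] at g1
    rw [← hp2] at g2
    have tail : ∀ Y Y' : ℤ, (p = 0 ∨ Y = Y') → iv Y p = iv Y' p := by
      rintro Y Y' (rfl | rfl) <;> rfl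
    rw [ych_eq2 hn0 hkn0 A (a+1) b p X _ hp hb (by omega) rfl,
      numE_eq A a b p X _ (X+a+1) hp hX rfl rfl, ← g1, ← g2]
    rw [tail (X + (a+1) + b) (X + a + 1 + k) (by omega),
      tail (X + ((a+1:ℕ):ℤ) + b) (X + ((a+1:ℕ):ℤ) + k) (by omega)]

theorem iv_append (x : ℤ) (a : ℕ) : ∀ m : ℕ, iv x a ++ iv (x + a) m = iv x (a + m) := by
  intro m
  induction m with
  | zero => simp [iv_zero]
  | succ m ih =>
    rw [iv_succ, ← List.append_assoc, ih, ← Nat.add_assoc, iv_succ]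
    push_cast
    rw [add_assoc]

theorem Jcyc_eq' {n k : ℕ} (hn0 : 0 < n) (hkn0 : k < n)
    (A : Matrix (Fin (n - k)) (ZMod n) ℂ) (x : ℤ) (i : ZMod n)
    (hi : i = ((x - 1 : ℤ) : ZMod n)) :
    Dz n (n - k) A (iv x (n - k)) = plucker n (n - k) A (Jcyc n k i) := by
  have hh : i = ((x + ((n - k : ℕ) : ℤ) - 1 + k : ℤ) : ZMod n) := by
    rw [hi, show (x + ((n - k : ℕ) : ℤ) - 1 + k : ℤ) = x - 1 + n by omega]
    push_cast
    simp
  rw [← Jcyc_eq hn0 hkn0 A (n - k) le_rfl x i hh, Nat.sub_self, iv_zero, List.append_nil]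

theorem Jplus_eq' {n k : ℕ} (hn0 : 0 < n) (hkn0 : k < n) (hk : 1 < k)
    (A : Matrix (Fin (n - k)) (ZMod n) ℂ) (p : ℕ) (hp : p + 1 = n - k) (x : ℤ) (i : ZMod n)
    (hi : i = ((x - 1 : ℤ) : ZMod n)) :
    Dz n (n - k) A (iv x p ++ [x + p + 1]) = plucker n (n - k) A (Jplus n k i) := by
  have hh : i = ((x + (p : ℤ) + k : ℤ) : ZMod n) := by
    rw [hi, show (x + (p : ℤ) + k : ℤ) = x - 1 + n by omega]
    push_cast
    simp
  rw [← Jplus_eq hn0 hkn0 hk A p (by omega) x i hh, show n - k - p - 1 = 0 by omega, iv_zero]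

theorem diag_odd {n k : ℕ} (hk : 2 ≤ k) (hkn : k + 2 ≤ n)
    (A : Matrix (Fin (n - k)) (ZMod n) ℂ)
    (hy : ∀ i ≤ n - k, ∀ j ≤ k, ych k n A i j ≠ 0) (e d : ℤ) (hde : d = 2 * e + 1)
    (hd1 : 1 - (k:ℤ) ≤ d) (hd2 : d ≤ n - k - 2) (i : ZMod n)
    (hi : i = ((-(e + 1) : ℤ) : ZMod n)) :
    sumA k n (ych k n A) d + sumB k n (ych k n A) d =
      plucker n (n - k) A (Jplus n k i) / plucker n (n - k) A (Jcyc n k i) := by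
  have hn0 : 0 < n := by omega
  have hkn0 : k < n := by omega
  rw [show plucker n (n - k) A (Jplus n k i) / plucker n (n - k) A (Jcyc n k i) =
    0 - (-(plucker n (n - k) A (Jplus n k i) / plucker n (n - k) A (Jcyc n k i))) by ring]
  unfold sumA sumB
  apply telescope (n - k) k (by omega) hk d hd1 (by omega)
    (V := fun a b => -(numO n k A a b / ych k n A a b))
    (tA := fun a b => (ych k n A a (b + 1) * ych k n A (a + 1) (b - 1)) /
      (ych k n A a b * ych k n A (a + 1) b))
    (tB := fun a b => (ych k n A (a - 1) b * ych k n A (a + 1) (b - 1)) /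
      (ych k n A a (b - 1) * ych k n A a b))
  · intro a b hab ha hb1 hb2
    have y1 := hy a (by omega) b (by omega)
    have y2 := hy (a+1) (by omega) b (by omega)
    obtain ⟨c, rfl⟩ : ∃ c, b = c + 1 := ⟨b - 1, by omega⟩
    simp only [Nat.add_sub_cancel]
    obtain ⟨X, hX⟩ : ∃ X : ℤ, X = 1 - ((a + (c + 1) + 1) / 2 : ℤ) := ⟨_, rfl⟩
    obtain ⟨Y, hY⟩ : ∃ Y : ℤ, Y = X + a + (c + 1) := ⟨_, rfl⟩
    rcases Nat.lt_or_ge (a + 1) (n - k) with hlt | hge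
    · obtain ⟨p, hp⟩ : ∃ p, a + 2 + p = n - k := ⟨n - k - a - 2, by omega⟩
      have st := stepOA A X Y a p
      rw [← ych_eq2 hn0 hkn0 A a (c+1) (p+2) X Y (by omega) (by omega) (by omega) (by omega),
        ← ych_eq2 hn0 hkn0 A (a+1) (c+1) (p+1) X (Y+1) (by omega) (by omega) (by omega) (by omega),
        ← ych_eq2 hn0 hkn0 A a (c+1+1) (p+2) X (Y+1) (by omega) (by omega) (by omega) (by omega),
        ← ych_eq2 hn0 hkn0 A (a+1) c (p+1) X Y (by omega) (by omega) (by omega) (by omega),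
        ← numO_eq A a (c+1) (p+1) X Y _ (by omega) (by omega) (by omega) (by omega),
        ← numO_eq A (a+1) (c+1) p X (Y+1) _ (by omega) (by omega) (by omega) (by omega)] at st
      rw [neg_sub_neg, div_sub_div _ _ y1 y2, div_eq_div_iff (mul_ne_zero y1 y2) (mul_ne_zero y1 y2)]
      linear_combination (-(ych k n A a (c+1) * ych k n A (a+1) (c+1))) * st
    · have har : a + 1 = n - k := by omega
      have q1 : ych k n A a (c + 1 + 1) = numO n k A a (c+1) := by
        rw [ych_eq2 hn0 hkn0 A a (c+1+1) 1 X (Y+1) (by omega) (by omega) (by omega) (by omega),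
          numO_eq A a (c+1) 0 X Y (Y+1) (by omega) (by omega) (by omega) (by omega)]
        simp [iv]
      have q2 : ych k n A (a + 1) c = ych k n A (a + 1) (c + 1) := by
        rw [ych_eq2 hn0 hkn0 A (a+1) c 0 X Y (by omega) (by omega) (by omega) (by omega),
          ych_eq2 hn0 hkn0 A (a+1) (c+1) 0 X (Y+1) (by omega) (by omega) (by omega) (by omega)]
        rfl
      have q3 : numO n k A (a+1) (c+1) = 0 := by rw [har]; exact numO_last A _
      rw [q1, q2, q3]
      field_simp
      ring
  · intro a b hab ha1 ha2 hb1 hb2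
    have y1 := hy a (by omega) b (by omega)
    have y2 := hy a (by omega) (b-1) (by omega)
    obtain ⟨c, rfl⟩ : ∃ c, b = c + 1 := ⟨b - 1, by omega⟩
    obtain ⟨a, rfl⟩ : ∃ c, a = c + 1 := ⟨a - 1, by omega⟩
    simp only [Nat.add_sub_cancel] at y1 y2 ⊢
    obtain ⟨p, hp⟩ : ∃ p, a + 1 + 1 + p = n - k := ⟨n - k - a - 2, by omega⟩
    obtain ⟨X, hX⟩ : ∃ X : ℤ, X = 1 - ((a + 1 + (c + 1) + 1) / 2 : ℤ) := ⟨_, rfl⟩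
    obtain ⟨Y, hY⟩ : ∃ Y : ℤ, Y = X + (a + 1) + (c + 1) := ⟨_, rfl⟩
    have st := stepOB A X Y a p
    rw [← ych_eq2 hn0 hkn0 A (a+1) (c+1) (p+1) X Y (by omega) (by omega) (by omega) (by omega),
      ← ych_eq2 hn0 hkn0 A (a+1) c (p+1) (X+1) Y (by omega) (by omega) (by omega) (by omega),
      ← ych_eq2 hn0 hkn0 A a (c+1) (p+2) (X+1) Y (by omega) (by omega) (by omega) (by omega),
      ← ych_eq2 hn0 hkn0 A (a+2) c p X Y (by omega) (by omega) (by omega) (by omega),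
      ← numO_eq A (a+1) (c+1) p X Y _ (by omega) (by omega) (by omega) (by omega),
      ← numO_eq A (a+1) c p (X+1) Y _ (by omega) (by omega) (by omega) (by omega)] at st
    rw [neg_sub_neg, div_sub_div _ _ y2 y1, div_eq_div_iff (mul_ne_zero y2 y1) (mul_ne_zero y2 y1)]
    linear_combination (-(ych k n A (a+1) (c+1) * ych k n A (a+1) c)) * st
  · intro a b hab ha hb h
    obtain ⟨p, hp⟩ : ∃ p, a + 1 + p = n - k := ⟨n - k - a - 1, by omega⟩
    obtain ⟨S, hS⟩ : ∃ S : ℤ, S = -e := ⟨_, rfl⟩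
    have hii : i = ((S - 1 : ℤ) : ZMod n) := by
      rw [hi, hS]; congr 1; ring
    have g1 := Jcyc_eq' hn0 hkn0 A S i hii
    have g2 := Jplus_eq' hn0 hkn0 hk A (a + p) (by omega) S i hii
    have g3 : ych k n A a b = Dz n (n - k) A (iv S (n - k)) := by
      rcases h with rfl | rfl
      · rw [ych_eq2 hn0 hkn0 A 0 b (n-k) _ S (by omega) hb rfl (by omega)]
        rfl
      · rw [ych_eq2 hn0 hkn0 A a 0 (p+1) S (S+a) (by omega) hb (by omega) (by omega), iv_append,
          show a + (p + 1) = n - k by omega]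
    have g4 : numO n k A a b = Dz n (n - k) A (iv S (a + p) ++ [S + ((a + p : ℕ) : ℤ) + 1]) := by
      rcases h with rfl | rfl
      · rw [numO_eq A 0 b p _ S (S + ((0 + p : ℕ) : ℤ) + 1) (by omega) rfl (by omega) (by omega),
          Nat.zero_add]
        rfl
      · rw [numO_eq A a 0 p S (S+a) (S + ((a + p : ℕ) : ℤ) + 1) (by omega) (by omega) (by omega)
          (by omega), ← List.append_assoc, iv_append]
    rw [g3, g4, g1, g2]
  · intro a b hab ha hb h
    have : numO n k A a b = 0 := by
      by_cases har : a = n - k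
      · subst har; exact numO_last A _
      · obtain rfl : b = k := by omega
        obtain ⟨a, rfl⟩ : ∃ c, a = c + 1 := ⟨a - 1, by omega⟩
        obtain ⟨p, hp⟩ : ∃ p, a + 1 + 1 + p = n - b := ⟨n - b - a - 2, by omega⟩
        obtain ⟨X, hX⟩ : ∃ X : ℤ, X = 1 - ((a + 1 + b + 1) / 2 : ℤ) := ⟨_, rfl⟩
        rw [numO_eq A (a+1) b p X _ (X + n) hp (by omega) rfl (by omega), iv_cons,
          List.cons_append, ← List.append_assoc]
        exact Dz_wrap_zero hn0 A X _
    simp [this]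


theorem extra1 {n k : ℕ} (hk : 2 ≤ k) (hkn : k + 2 ≤ n)
    (A : Matrix (Fin (n - k)) (ZMod n) ℂ) (i : ZMod n) (hi : i = ((k / 2 : ℤ) : ZMod n)) :
    ych k n A 1 (k - 1) / ych k n A 0 k =
      plucker n (n - k) A (Jplus n k i) / plucker n (n - k) A (Jcyc n k i) := by
  have hn0 : 0 < n := by omega
  have hkn0 : k < n := by omega
  obtain ⟨Y, hY⟩ : ∃ Y : ℤ, Y = k / 2 + 1 := ⟨_, rfl⟩
  rw [ych_eq2 hn0 hkn0 A 1 (k-1) (n-k-0-1) (Y-1-k+1) (Y-1-k+1+k) (by omega) (by omega) (by omega)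
    (by omega), ych_eq2 hn0 hkn0 A 0 k (n-k) _ Y (by omega) (by omega) rfl (by omega),
    ← Jcyc_eq' hn0 hkn0 A Y i (by rw [hi, hY]; congr 1; ring),
    ← Jplus_eq hn0 hkn0 hk A 0 (by omega) (Y-1-k) i (by rw [hi, hY]; congr 1; push_cast; ring)]
  simp [iv]

theorem extra2 {n k : ℕ} (hk : 2 ≤ k) (hkn : k + 2 ≤ n)
    (A : Matrix (Fin (n - k)) (ZMod n) ℂ) (i : ZMod n)
    (hi : i = ((k + (n - k) / 2 : ℤ) : ZMod n)) :
    ych k n A (n - k - 1) 1 / ych k n A (n - k) 0 =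
      plucker n (n - k) A (Jplus n k i) / plucker n (n - k) A (Jcyc n k i) := by
  have hn0 : 0 < n := by omega
  have hkn0 : k < n := by omega
  obtain ⟨X, hX⟩ : ∃ X : ℤ, X = 1 + k + (n - k) / 2 - n := ⟨_, rfl⟩
  have hii : i = ((X - 1 : ℤ) : ZMod n) := by
    rw [hi, show X - 1 = (k + (n - k) / 2 : ℤ) - n by omega, Int.cast_sub]
    simp
  rw [ych_eq2 hn0 hkn0 A (n-k-1) 1 1 X (X + (n-k-1:ℕ) + 1) (by omega) (by omega) (by omega)
    (by omega), ych_eq2 hn0 hkn0 A (n-k) 0 0 X _ (by omega) (by omega) (by omega) rfl,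
    ← Jcyc_eq' hn0 hkn0 A X i hii,
    ← Jplus_eq' hn0 hkn0 hk A (n-k-1) (by omega) X i hii]
  simp [iv]

theorem reindex {n k : ℕ} (hk : 2 ≤ k) (hkn : k + 2 ≤ n) (ρ : ℕ → ℂ) (q : ℂ) (T : ℤ → ℂ) (u v : ℂ)
    (hu : u = ρ (k / 2)) (hv : v = ρ (k + (n - k) / 2))
    (hE : ∀ e d : ℤ, d = 2 * e → 1 - (k:ℤ) ≤ d → d ≤ n - k - 2 → T d = ρ (k + e).toNat)
    (hO : ∀ e d : ℤ, d = 2 * e + 1 → 1 - (k:ℤ) ≤ d → d ≤ n - k - 2 →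
      T d = ρ (if d < -1 then -(e + 1) else n - (e + 1)).toNat) :
    (∑ i ∈ Finset.Icc 1 n, ρ i * q ^ (if i = k then 1 else 0)) = u + v +
      ∑ d ∈ Finset.Icc (1 - (k : ℤ)) ((n : ℤ) - k - 2), T d * q ^ (if d = 0 then 1 else 0) := by
  let φ : ℤ → ℕ := fun d => if d % 2 = 0 then (k + d / 2).toNat else
    if d < -1 then (-((d + 1) / 2)).toNat else (n - (d + 1) / 2).toNat
  let ψ : ℕ → ℤ := fun i =>
    if -(k:ℤ) ≤ 2 * ((i:ℤ) - k) ∧ 2 * ((i:ℤ) - k) ≤ n - k - 1 then 2 * ((i:ℤ) - k) else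
    if -(k:ℤ) ≤ -2 * (i:ℤ) - 1 then -2 * (i:ℤ) - 1 else 2 * ((n:ℤ) - i) - 1
  have h1 : (∑ i ∈ Finset.Icc 1 n, ρ i * q ^ (if i = k then 1 else 0)) =
      ∑ d ∈ Finset.Icc (-(k : ℤ)) ((n : ℤ) - k - 1), ρ (φ d) * q ^ (if d = 0 then 1 else 0) := by
    symm
    apply Finset.sum_nbij' φ ψ
    · intro d hd
      rw [Finset.mem_Icc] at hd ⊢
      simp only [φ]
      split_ifs <;> omega
    · intro i hi
      rw [Finset.mem_Icc] at hi ⊢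
      simp only [ψ]
      split_ifs <;> omega
    · intro d hd
      rw [Finset.mem_Icc] at hd
      simp only [φ, ψ]
      split_ifs <;> omega
    · intro i hi
      rw [Finset.mem_Icc] at hi
      simp only [φ, ψ]
      split_ifs <;> omega
    · intro d hd
      rw [Finset.mem_Icc] at hd
      congr 2
      have : d = 0 ↔ φ d = k := by
        simp only [φ]
        split_ifs <;> omega
      simp only [this]
  have h2 : Finset.Icc (-(k : ℤ)) ((n : ℤ) - k - 1) =
      insert (-(k:ℤ)) (insert ((n:ℤ) - k - 1) (Finset.Icc (1 - (k : ℤ)) ((n : ℤ) - k - 2))) := by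
    ext d
    simp only [Finset.mem_insert, Finset.mem_Icc]
    omega
  rw [h1, h2, Finset.sum_insert (by simp only [Finset.mem_insert, Finset.mem_Icc]; omega),
    Finset.sum_insert (by simp only [Finset.mem_Icc]; omega), ← add_assoc]
  congr 1
  · rw [if_neg (by omega), if_neg (by omega), pow_zero, mul_one, mul_one, hu, hv]
    congr 2
    · simp only [φ]
      split_ifs <;> omega
    · simp only [φ]
      split_ifs <;> omega
  · apply Finset.sum_congr rfl
    intro d hd
    rw [Finset.mem_Icc] at hd
    congr 1
    by_cases hd2 : d % 2 = 0
    · rw [hE (d / 2) d (by omega) hd.1 hd.2]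
      congr 1
      simp only [φ]
      rw [if_pos hd2]
    · rw [hO (d / 2) d (by omega) hd.1 hd.2]
      congr 1
      simp only [φ]
      rw [if_neg hd2]
      split_ifs <;> omega

/-- the superpotential of the Grassmannian, expressed in the Plücker
coordinates attached to the checkboard graph `G^ch_{k,n}`. -/
theorem superpotential_checkboard
    (n k : ℕ) (hn : 4 ≤ n) (hk : 2 ≤ k) (hkn : k ≤ n - 2)
    (A : Matrix (Fin (n - k)) (ZMod n) ℂ)
    (hy : ∀ i ≤ n - k, ∀ j ≤ k, ych k n A i j ≠ 0)
    (q : ℂ) :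
    (∑ i ∈ Finset.Icc 1 n,
        (plucker n (n - k) A (Jplus n k (i : ZMod n)) /
          plucker n (n - k) A (Jcyc n k (i : ZMod n))) * q ^ (if i = k then 1 else 0)) =
      ych k n A 1 (k - 1) / ych k n A 0 k +
      ych k n A (n - k - 1) 1 / ych k n A (n - k) 0 +
      ∑ d ∈ Finset.Icc (1 - (k : ℤ)) ((n : ℤ) - k - 2),
        (sumA k n (ych k n A) d + sumB k n (ych k n A) d) * q ^ (if d = 0 then 1 else 0) := by

  have hkn2 : k + 2 ≤ n := by omega
  apply reindex hk hkn2 (fun i : ℕ => plucker n (n - k) A (Jplus n k (i : ZMod n)) /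
          plucker n (n - k) A (Jcyc n k (i : ZMod n))) q
          (fun d => sumA k n (ych k n A) d + sumB k n (ych k n A) d)
  · apply extra1 hk hkn2
    rw [← Int.cast_natCast]; push_cast; rfl
  · apply extra2 hk hkn2
    rw [← Int.cast_natCast]
    congr 1
    omega
  · intro e d h1 h2 h3
    apply diag_even hk hkn2 A hy e d h1 h2 h3
    rw [← Int.cast_natCast]
    congr 1
    omega
  · intro e d h1 h2 h3
    apply diag_odd hk hkn2 A hy e d h1 h2 h3
    rw [← Int.cast_natCast]
    split_ifs with h
    · congr 1
      omega
    · rw [show (((n - (e + 1) : ℤ).toNat : ℕ) : ℤ) = n + -(e + 1) by omega, Int.cast_add]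
      simp
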